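/- arXiv:2102.06472 — 5 statements merged into one kernel-verified Lean document; each statement's English description precedes it below -/
import Mathlib

section
/- Let t0 ≤ T be real numbers, let b > 0, let ρ : [t0, T] → [0, b] be a measurable function, let γ : [t0, T] → [0, ∞) be an integrable function, and let μ : [0, b] → [0, ∞) be a continuous non-decreasing function with μ(s) > 0 for every s ∈ (0, b]. Suppose there exists c ∈ (0, b) such that for all t ∈ [t0, T], ρ(t) ≤ c + ∫_{t0}^{t} γ(s) μ(ρ(s)) ds. Define M(x) := ∫_x^b ds/μ(s) for x ∈ [0, b] (with value +∞ allowed when x = 0). Then for all t ∈ [t0, T], M(c) ≤ M(ρ(t)) + ∫_{t0}^{t} γ(s) ds (as an inequality in the extended reals). -/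
open MeasureTheory Set

lemma osgood_core (t0 T c : ℝ) (hT : t0 ≤ T) (γ g ν : ℝ → ℝ)
    (hγ : IntegrableOn γ (Icc t0 T)) (hg : IntegrableOn g (Icc t0 T))
    (hγ0 : ∀ s ∈ Icc t0 T, 0 ≤ γ s) (hg0 : ∀ s ∈ Icc t0 T, 0 ≤ g s)
    (hν : Continuous ν) (hmono : Monotone ν) (hpos : ∀ x, 0 < ν x)
    (h : ∀ s ∈ Icc t0 T, g s ≤ γ s * ν (c + ∫ u in t0..s, g u)) :
    ∀ t ∈ Icc t0 T, (∫ x in c..(c + ∫ u in t0..t, g u), 1 / ν x) ≤ ∫ u in t0..t, γ u := by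
  have hνi : Continuous fun x => 1 / ν x :=
    continuous_const.div hν fun x => (hpos x).ne'
  set R : ℝ → ℝ := fun t => c + ∫ u in t0..t, g u with hR
  have hint : ∀ f : ℝ → ℝ, IntegrableOn f (Icc t0 T) → ∀ x ∈ Icc t0 T, ∀ y ∈ Icc t0 T,
      IntervalIntegrable f volume x y := by
    intro f hf x hx y hy
    apply IntegrableOn.intervalIntegrable
    exact hf.mono_set (uIcc_subset_Icc hx hy)
  have hcontI : ∀ f : ℝ → ℝ, IntegrableOn f (Icc t0 T) →
      ContinuousOn (fun t => ∫ u in t0..t, f u) (Icc t0 T) := by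
    intro f hf
    exact intervalIntegral.continuousOn_primitive_interval (by rwa [uIcc_of_le hT]) |>.mono
      (by rw [uIcc_of_le hT])
  have hRc : ContinuousOn R (Icc t0 T) := continuousOn_const.add (hcontI g hg)
  have hGc : Continuous fun y => ∫ x in c..y, 1 / ν x :=
    intervalIntegral.continuous_primitive (fun a b => hνi.intervalIntegrable a b) c
  have ht0 : t0 ∈ Icc t0 T := left_mem_Icc.2 hT
  have hRsub : ∀ x ∈ Icc t0 T, ∀ y ∈ Icc t0 T, R y - R x = ∫ u in x..y, g u := by
    intro x hx y hy
    have := intervalIntegral.integral_add_adjacent_intervals (hint g hg t0 ht0 x hx)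
      (hint g hg x hx y hy)
    simp only [hR]; linarith
  have hRmono : ∀ x ∈ Icc t0 T, ∀ y ∈ Icc t0 T, x ≤ y → R x ≤ R y := by
    intro x hx y hy hxy
    have h1 := hRsub x hx y hy
    have h2 : 0 ≤ ∫ u in x..y, g u :=
      intervalIntegral.integral_nonneg hxy fun u hu => hg0 u ⟨hx.1.trans hu.1, hu.2.trans hy.2⟩
    linarith
  have key : ∀ ε > 0, ∀ t ∈ Icc t0 T,
      (∫ x in c..(R t), 1 / ν x) ≤ (1 + ε) * ∫ u in t0..t, γ u := by
    intro ε hε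
    have hsub : Icc t0 T ⊆ {t | (∫ x in c..(R t), 1 / ν x) ≤ (1 + ε) * ∫ u in t0..t, γ u} := by
      apply IsClosed.Icc_subset_of_forall_exists_gt
      · have : ({t | (∫ x in c..(R t), 1 / ν x) ≤ (1 + ε) * ∫ u in t0..t, γ u} ∩ Icc t0 T)
          = {t ∈ Icc t0 T | (∫ x in c..(R t), 1 / ν x) ≤ (1 + ε) * ∫ u in t0..t, γ u} := by
          ext; simp [and_comm]
        rw [this]
        exact isClosed_Icc.isClosed_le (hGc.comp_continuousOn hRc)
          (continuousOn_const.mul (hcontI γ hγ))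
      · simp [hR]
      · rintro x ⟨hx, hxI⟩ z hz
        have hxI' : x ∈ Icc t0 T := Ico_subset_Icc_self hxI
        have hcw : ContinuousWithinAt (fun y => ν (R y)) (Icc t0 T) x :=
          (hν.comp_continuousOn hRc) x hxI'
        have hlt : ν (R x) < (1 + ε) * ν (R x) := by nlinarith [hpos (R x)]
        have hev := hcw.eventually (gt_mem_nhds hlt)
        have hev2 : ∀ᶠ y in nhdsWithin x (Ioi x), ν (R y) < (1 + ε) * ν (R x) := by
          apply Filter.Eventually.filter_mono _ hev
          rw [← nhdsWithin_Ioo_eq_nhdsGT hxI.2]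
          exact nhdsWithin_mono x fun y hy => ⟨hxI.1.trans hy.1.le, hy.2.le⟩
        have hz' : x < min z T := lt_min hz hxI.2
        obtain ⟨y, hy1, hy2⟩ := (hev2.and (Ioo_mem_nhdsGT hz')).exists
        have hyz : y < z := hy2.2.trans_le (min_le_left _ _)
        have hyT : y < T := hy2.2.trans_le (min_le_right _ _)
        have hyI : y ∈ Icc t0 T := ⟨hxI.1.trans hy2.1.le, hyT.le⟩
        refine ⟨y, ?_, hy2.1, hyz.le⟩
        have hxy := hy2.1.le
        have hRxy := hRmono x hxI' y hyI hxy
        have e1 := intervalIntegral.integral_add_adjacent_intervals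
          (hνi.intervalIntegrable (μ := volume) c (R x))
          (hνi.intervalIntegrable (μ := volume) (R x) (R y))
        have e2 := intervalIntegral.integral_add_adjacent_intervals (hint γ hγ t0 ht0 x hxI')
          (hint γ hγ x hxI' y hyI)
        have e3 : ∫ s in (R x)..(R y), 1 / ν s ≤ (R y - R x) * (1 / ν (R x)) := by
          have := intervalIntegral.integral_mono_on hRxy
            (hνi.intervalIntegrable (μ := volume) (R x) (R y))
            (intervalIntegrable_const (c := 1 / ν (R x)))
            (fun s hs => one_div_le_one_div_of_le (hpos _) (hmono hs.1))
          simpa using this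
        have e4 : R y - R x ≤ ν (R y) * ∫ u in x..y, γ u := by
          rw [hRsub x hxI' y hyI, ← intervalIntegral.integral_const_mul]
          apply intervalIntegral.integral_mono_on hxy (hint g hg x hxI' y hyI)
            ((hint γ hγ x hxI' y hyI).const_mul _)
          intro s hs
          have hsI : s ∈ Icc t0 T := ⟨hxI.1.trans hs.1, hs.2.trans hyI.2⟩
          have := hmono (hRmono s hsI y hyI hs.2)
          have h3 := mul_le_mul_of_nonneg_left this (hγ0 s hsI)
          have h4 := h s hsI
          simp only [hR] at *
          linarith
        have e5 : 0 ≤ ∫ u in x..y, γ u :=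
          intervalIntegral.integral_nonneg hxy
            fun u hu => hγ0 u ⟨hxI.1.trans hu.1, hu.2.trans hyI.2⟩
        have e6 : (R y - R x) * (1 / ν (R x)) ≤ (1 + ε) * ∫ u in x..y, γ u := by
          rw [mul_one_div, div_le_iff₀ (hpos _)]
          nlinarith
        simp only [mem_setOf_eq] at hx ⊢
        rw [← e1, ← e2]
        linarith
    exact fun t ht => hsub ht
  intro t ht
  have h5 : 0 ≤ ∫ u in t0..t, γ u :=
    intervalIntegral.integral_nonneg ht.1 fun u hu => hγ0 u ⟨hu.1, hu.2.trans ht.2⟩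
  apply le_of_forall_pos_le_add
  intro ε hε
  have := key (ε / (1 + ∫ u in t0..t, γ u)) (by positivity) t ht
  refine this.trans ?_
  have : ε / (1 + ∫ u in t0..t, γ u) * (∫ u in t0..t, γ u) ≤ ε := by
    rw [div_mul_eq_mul_div, div_le_iff₀ (by positivity)]
    nlinarith
  linarith

/-- Osgood's lemma. -/
theorem osgood_lemma
    (t0 T b : ℝ) (ht0T : t0 ≤ T) (hb : 0 < b)
    (ρ γ μ : ℝ → ℝ)
    (hρ_meas : Measurable ρ)
    (hρ_mem : ∀ t ∈ Icc t0 T, ρ t ∈ Icc 0 b)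
    (hγ_int : IntegrableOn γ (Icc t0 T))
    (hγ_nonneg : ∀ s ∈ Icc t0 T, 0 ≤ γ s)
    (hμ_cont : ContinuousOn μ (Icc 0 b))
    (hμ_mono : MonotoneOn μ (Icc 0 b))
    (hμ_nonneg : ∀ s ∈ Icc 0 b, 0 ≤ μ s)
    (hμ_pos : ∀ s ∈ Ioc 0 b, 0 < μ s)
    (c : ℝ) (hc : c ∈ Ioo 0 b)
    (hineq : ∀ t ∈ Icc t0 T, ρ t ≤ c + ∫ s in t0..t, γ s * μ (ρ s)) :
    ∀ t ∈ Icc t0 T,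
      (∫⁻ s in Ioc c b, ENNReal.ofReal (1 / μ s)) ≤
        (∫⁻ s in Ioc (ρ t) b, ENNReal.ofReal (1 / μ s)) +
          ENNReal.ofReal (∫ s in t0..t, γ s) := by
  intro t ht
  have hcl : ∀ a ∈ Icc 0 b, ∀ x, max a (min b x) ∈ Icc 0 b := fun a ha x =>
    ⟨ha.1.trans (le_max_left _ _), max_le ha.2 (min_le_left _ _)⟩
  have hcI : c ∈ Icc 0 b := Ioo_subset_Icc_self hc
  have hcontcl : ∀ a ∈ Icc 0 b, Continuous fun x => μ (max a (min b x)) := fun a ha =>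
    hμ_cont.comp_continuous (by fun_prop) (hcl a ha)
  set ν : ℝ → ℝ := fun x => μ (max c (min b x)) with hνdef
  have hνpos : ∀ x, 0 < ν x := fun x =>
    hμ_pos _ ⟨hc.1.trans_le (le_max_left _ _), (hcl c hcI x).2⟩
  have hνmono : Monotone ν := fun x y hxy =>
    hμ_mono (hcl c hcI x) (hcl c hcI y) (max_le_max le_rfl (min_le_min le_rfl hxy))
  have hg : IntegrableOn (fun s => γ s * μ (ρ s)) (Icc t0 T) := by
    have h0 : (0:ℝ) ∈ Icc 0 b := ⟨le_rfl, hb.le⟩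
    have h1 : IntegrableOn (fun s => γ s * μ (max 0 (min b (ρ s)))) (Icc t0 T) := by
      apply Integrable.mul_bdd (c := μ b) hγ_int
      · exact ((hcontcl 0 h0).measurable.comp hρ_meas).aestronglyMeasurable
      · filter_upwards with s
        rw [Real.norm_of_nonneg (hμ_nonneg _ (hcl 0 h0 _))]
        exact hμ_mono (hcl 0 h0 _) ⟨hb.le, le_rfl⟩ (hcl 0 h0 _).2
    refine h1.congr_fun (fun s hs => ?_) measurableSet_Icc
    have := hρ_mem s hs
    simp only
    rw [min_eq_right this.2, max_eq_right this.1]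
  have hνc : Continuous ν := hcontcl c hcI
  have hcore := osgood_core t0 T c ht0T γ _ ν hγ_int hg hγ_nonneg
    (fun s hs => mul_nonneg (hγ_nonneg s hs) (hμ_nonneg _ (hρ_mem s hs)))
    hνc hνmono hνpos (fun s hs => by
      apply mul_le_mul_of_nonneg_left _ (hγ_nonneg s hs)
      apply hμ_mono (hρ_mem s hs) (hcl c hcI _)
      exact le_max_of_le_right (le_min (hρ_mem s hs).2 (hineq s hs))) t ht
  rcases le_or_gt (ρ t) c with hle | hlt
  · exact (lintegral_mono_set (Ioc_subset_Ioc_left hle)).trans le_self_add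
  have hνi : Continuous fun x => 1 / ν x :=
    continuous_const.div hνc fun x => (hνpos x).ne'
  have hρb := (hρ_mem t ht).2
  rw [← Ioc_union_Ioc_eq_Ioc hlt.le hρb, add_comm]
  refine (lintegral_union_le _ _ _).trans ?_
  gcongr
  have e1 : ∫⁻ s in Ioc c (ρ t), ENNReal.ofReal (1 / μ s)
      = ∫⁻ s in Ioc c (ρ t), ENNReal.ofReal (1 / ν s) := by
    apply setLIntegral_congr_fun measurableSet_Ioc
    intro s hs
    simp only [hνdef]
    rw [min_eq_right (hs.2.trans hρb), max_eq_right hs.1.le]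
  rw [e1, ← ofReal_integral_eq_lintegral_ofReal
    ((hνi.intervalIntegrable (μ := volume) c (ρ t)).1)
    (Filter.Eventually.of_forall fun x => (one_div_pos.2 (hνpos x)).le),
    ← intervalIntegral.integral_of_le hlt.le]
  apply ENNReal.ofReal_le_ofReal
  refine le_trans ?_ hcore
  apply intervalIntegral.integral_mono_interval le_rfl hlt.le (hineq t ht)
    (Filter.Eventually.of_forall fun x => (one_div_pos.2 (hνpos x)).le)
    (hνi.intervalIntegrable _ _)
end

section
/- Let T > 0, let x : [0, T] → ℝ be a bounded function that is right-continuous at every point and admits a left limit at every point of (0, T], and let x_n : [0, T] → ℝ (n ∈ ℕ) be measurable functions. Let (λ_n)_n be a sequence of time-changes on [0, T] such that both sup_{0≤t≤T} |x_n(t) − x(λ_n(t))| and sup_{0≤t≤T} |t − λ_n(t)| vanish as n → ∞. Then sup_{0≤t≤T} | ∫_0^t x_n(s) ds − ∫_0^{λ_n(t)} x(s) ds | → 0 as n → ∞. -/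
open Set MeasureTheory

lemma countable_disc_aux (T : ℝ) (x : ℝ → ℝ)
    (hx_right : ∀ t ∈ Icc (0 : ℝ) T, ContinuousWithinAt x (Ici t) t) :
    {t ∈ Icc (0 : ℝ) T | ¬ ContinuousAt x t}.Countable := by
  let D : ℕ → Set ℝ := fun k =>
    {t ∈ Icc (0 : ℝ) T | ¬ ∀ᶠ s in nhds t, |x s - x t| < 1 / ((k : ℝ) + 1)}
  have hD : ∀ k, (D k).Countable := by
    intro k
    refine (countable_setOfPred_isolated_right_within (s := D k)).mono ?_
    intro t ht
    refine ⟨ht, ?_⟩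
    have hk : (0 : ℝ) < 1 / ((k : ℝ) + 1) := by positivity
    have h1 : ∀ᶠ y in nhdsWithin t (Ici t), |x y - x t| < 1 / ((k : ℝ) + 1) / 2 := by
      have := (Metric.tendsto_nhds.1 (hx_right t ht.1)) _ (half_pos hk)
      simpa [Real.dist_eq] using this
    obtain ⟨u, hu, hsub⟩ := mem_nhdsGE_iff_exists_Ico_subset.1 h1
    rw [← Filter.empty_mem_iff_bot, mem_nhdsWithin]
    refine ⟨Iio u, isOpen_Iio, hu, ?_⟩
    rintro y ⟨hyu, hyD, hty⟩
    refine hyD.2 ?_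
    filter_upwards [Ioo_mem_nhds (show t < y from hty) (show y < u from hyu)] with s hs
    have a1 := hsub (show s ∈ Ico t u from ⟨hs.1.le, hs.2⟩)
    have a2 := hsub (show y ∈ Ico t u from ⟨le_of_lt hty, hyu⟩)
    simp only [mem_setOf_eq] at a1 a2
    rw [abs_lt] at a1 a2 ⊢
    constructor <;> linarith [a1.1, a1.2, a2.1, a2.2]
  refine (countable_iUnion hD).mono ?_
  rintro t ⟨ht, hc⟩
  by_contra hn
  apply hc
  rw [ContinuousAt, Metric.tendsto_nhds]
  intro ε hε
  obtain ⟨k, hk⟩ := exists_nat_one_div_lt hε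
  have : ∀ᶠ s in nhds t, |x s - x t| < 1 / ((k : ℝ) + 1) := by
    by_contra h
    exact hn (mem_iUnion.2 ⟨k, ht, h⟩)
  filter_upwards [this] with s hs
  rw [Real.dist_eq]
  exact hs.trans hk

theorem integral_skorohod_convergence (T : ℝ) (hT : 0 < T)
    (x : ℝ → ℝ) (xn : ℕ → ℝ → ℝ) (l : ℕ → ℝ → ℝ)
    (hx_bdd : ∃ M : ℝ, ∀ t ∈ Icc (0 : ℝ) T, |x t| ≤ M)
    (hx_right : ∀ t ∈ Icc (0 : ℝ) T, ContinuousWithinAt x (Ici t) t)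
    (hx_left : ∀ t ∈ Ioc (0 : ℝ) T, ∃ L : ℝ,
      Filter.Tendsto x (nhdsWithin t (Iio t)) (nhds L))
    (hxn_meas : ∀ n, Measurable (xn n))
    (hl_cont : ∀ n, ContinuousOn (l n) (Icc (0 : ℝ) T))
    (hl_mono : ∀ n, StrictMonoOn (l n) (Icc (0 : ℝ) T))
    (hl_maps : ∀ n, MapsTo (l n) (Icc (0 : ℝ) T) (Icc (0 : ℝ) T))
    (hl0 : ∀ n, l n 0 = 0) (hlT : ∀ n, l n T = T)
    (hxconv : ∀ ε > (0 : ℝ), ∃ N, ∀ n ≥ N, ∀ t ∈ Icc (0 : ℝ) T, |xn n t - x (l n t)| ≤ ε)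
    (hlconv : ∀ ε > (0 : ℝ), ∃ N, ∀ n ≥ N, ∀ t ∈ Icc (0 : ℝ) T, |t - l n t| ≤ ε) :
    ∀ ε > (0 : ℝ), ∃ N, ∀ n ≥ N, ∀ t ∈ Icc (0 : ℝ) T,
      |(∫ s in (0 : ℝ)..t, xn n s) - ∫ s in (0 : ℝ)..(l n t), x s| ≤ ε := by
  obtain ⟨M, hM⟩ := hx_bdd
  have hM0 : 0 ≤ M := (abs_nonneg _).trans (hM 0 ⟨le_rfl, hT.le⟩)
  let μ : Measure ℝ := volume.restrict (Ioc (0 : ℝ) T)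
  have hmem : ∀ᵐ s ∂μ, s ∈ Icc (0 : ℝ) T := by
    filter_upwards [ae_restrict_mem measurableSet_Ioc] with s hs using Ioc_subset_Icc_self hs
  have hcont : ∀ᵐ s ∂μ, ContinuousAt x s := by
    have h0 := (countable_disc_aux T x hx_right).ae_notMem μ
    filter_upwards [h0, hmem] with s hs hs'
    by_contra hc
    exact hs ⟨hs', hc⟩
  have hlim : ∀ᵐ s ∂μ, Filter.Tendsto (fun n => xn n s) Filter.atTop (nhds (x s)) := by
    filter_upwards [hcont, hmem] with s hc hs
    have h1 : Filter.Tendsto (fun n => l n s) Filter.atTop (nhds s) := by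
      rw [Metric.tendsto_atTop]
      intro ε hε
      obtain ⟨N, hN⟩ := hlconv (ε / 2) (half_pos hε)
      refine ⟨N, fun n hn => ?_⟩
      rw [dist_comm, Real.dist_eq]
      linarith [hN n hn s hs]
    have h2 : Filter.Tendsto (fun n => x (l n s)) Filter.atTop (nhds (x s)) := hc.tendsto.comp h1
    have h3 : Filter.Tendsto (fun n => xn n s - x (l n s)) Filter.atTop (nhds 0) := by
      rw [Metric.tendsto_atTop]
      intro ε hε
      obtain ⟨N, hN⟩ := hxconv (ε / 2) (half_pos hε)
      refine ⟨N, fun n hn => ?_⟩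
      rw [Real.dist_eq, sub_zero]
      linarith [hN n hn s hs]
    simpa using h3.add h2
  have hxm : AEStronglyMeasurable x μ :=
    aestronglyMeasurable_of_tendsto_ae Filter.atTop
      (fun n => (hxn_meas n).aestronglyMeasurable) hlim
  have hxi : Integrable x μ := by
    refine Integrable.of_bound hxm M ?_
    filter_upwards [hmem] with s hs using hM s hs
  obtain ⟨N1, hN1⟩ := hxconv 1 one_pos
  have hb : ∀ n ≥ N1, ∀ s ∈ Icc (0 : ℝ) T, |xn n s| ≤ M + 1 := by
    intro n hn s hs
    have a := hN1 n hn s hs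
    have b := hM _ (hl_maps n hs)
    rw [abs_le] at a b ⊢
    constructor <;> linarith [a.1, a.2, b.1, b.2]
  have hxni : ∀ n ≥ N1, Integrable (xn n) μ := by
    intro n hn
    refine Integrable.of_bound (hxn_meas n).aestronglyMeasurable (M + 1) ?_
    filter_upwards [hmem] with s hs using hb n hn s hs
  have hL1 : Filter.Tendsto (fun n => ∫ s, |xn n s - x s| ∂μ) Filter.atTop (nhds 0) := by
    have : Filter.Tendsto (fun n => ∫ s, |xn n s - x s| ∂μ) Filter.atTop
        (nhds (∫ _, (0 : ℝ) ∂μ)) := by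
      refine tendsto_integral_filter_of_dominated_convergence (fun _ => 2 * M + 1) ?_ ?_ ?_ ?_
      · exact Filter.Eventually.of_forall fun n =>
          ((hxn_meas n).aestronglyMeasurable.sub hxm).norm
      · filter_upwards [Filter.eventually_ge_atTop N1] with n hn
        filter_upwards [hmem] with s hs
        have a := hb n hn s hs
        have b := hM s hs
        rw [Real.norm_eq_abs, abs_abs]
        rw [abs_le] at a b ⊢
        constructor <;> linarith [a.1, a.2, b.1, b.2]
      · exact integrable_const _
      · filter_upwards [hlim] with s hs
        have := (hs.sub_const (x s)).abs
        simpa using this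
    simpa using this
  intro ε hε
  obtain ⟨N2, hN2⟩ := Metric.tendsto_atTop.1 hL1 (ε / 2) (half_pos hε)
  obtain ⟨N3, hN3⟩ := hlconv (ε / (2 * (M + 1))) (by positivity)
  refine ⟨max N1 (max N2 N3), fun n hn t ht => ?_⟩
  have hn1 : N1 ≤ n := (le_max_left _ _).trans hn
  have hn2 : N2 ≤ n := (le_max_left _ _).trans ((le_max_right _ _).trans hn)
  have hn3 : N3 ≤ n := (le_max_right _ _).trans ((le_max_right _ _).trans hn)
  have key : ∀ f : ℝ → ℝ, Integrable f μ → ∀ a ∈ Icc (0 : ℝ) T, ∀ b ∈ Icc (0 : ℝ) T,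
      IntervalIntegrable f volume a b := by
    intro f hf a ha b hb
    have : IntervalIntegrable f volume 0 T :=
      (intervalIntegrable_iff_integrableOn_Ioc_of_le hT.le).2 hf
    refine this.mono_set ?_
    rw [uIcc_of_le hT.le]
    exact uIcc_subset_Icc ha hb
  have h00 : (0 : ℝ) ∈ Icc (0 : ℝ) T := ⟨le_rfl, hT.le⟩
  have hlt := hl_maps n ht
  have e : (∫ s in (0 : ℝ)..t, xn n s) - ∫ s in (0 : ℝ)..(l n t), x s
      = (∫ s in (0 : ℝ)..t, (xn n s - x s)) + ∫ s in (l n t)..t, x s := by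
    rw [intervalIntegral.integral_sub (key _ (hxni n hn1) _ h00 _ ht) (key _ hxi _ h00 _ ht),
      ← intervalIntegral.integral_add_adjacent_intervals (key _ hxi _ h00 _ hlt)
        (key _ hxi _ hlt _ ht)]
    ring
  have b1 : |∫ s in (0 : ℝ)..t, (xn n s - x s)| ≤ ε / 2 := by
    have c1 : |∫ s in (0 : ℝ)..t, (xn n s - x s)| ≤ ∫ s in (0 : ℝ)..t, |xn n s - x s| :=
      intervalIntegral.abs_integral_le_integral_abs ht.1
    have c2 : ∫ s in (0 : ℝ)..t, |xn n s - x s| ≤ ∫ s, |xn n s - x s| ∂μ := by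
      rw [intervalIntegral.integral_of_le ht.1]
      refine setIntegral_mono_set ((hxni n hn1).sub hxi).abs ?_ ?_
      · exact Filter.Eventually.of_forall fun s => abs_nonneg _
      · exact (Ioc_subset_Ioc_right ht.2).eventuallyLE
    have c3 := hN2 n hn2
    rw [Real.dist_eq, sub_zero] at c3
    linarith [le_abs_self (∫ s, |xn n s - x s| ∂μ)]
  have b2 : |∫ s in (l n t)..t, x s| ≤ ε / 2 := by
    have c1 : ‖∫ s in (l n t)..t, x s‖ ≤ M * |t - l n t| := by
      refine intervalIntegral.norm_integral_le_of_norm_le_const fun s hs => ?_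
      exact hM s (uIcc_subset_Icc hlt ht (uIoc_subset_uIcc hs))
    have c2 := hN3 n hn3 t ht
    have c3 : (M + 1) * |t - l n t| ≤ ε / 2 := by
      calc (M + 1) * |t - l n t| ≤ (M + 1) * (ε / (2 * (M + 1))) := by gcongr
        _ = ε / 2 := by field_simp
    rw [Real.norm_eq_abs] at c1
    nlinarith [abs_nonneg (t - l n t)]
  rw [e]
  linarith [abs_add_le (∫ s in (0 : ℝ)..t, (xn n s - x s)) (∫ s in (l n t)..t, x s)]
end

section
/- Let T > 0, let x, y : [0, T] → ℝ with y bounded, right-continuous at every point and admitting a left limit at every point of (0, T], and let x_n, y_n : [0, T] → ℝ (n ∈ ℕ) with each y_n measurable. Suppose there exists a single sequence of time-changes (λ_n)_n on [0, T] such that sup_{0≤t≤T} |x_n(t) − x(λ_n(t))| → 0, sup_{0≤t≤T} |y_n(t) − y(λ_n(t))| → 0 and sup_{0≤t≤T} |t − λ_n(t)| → 0 as n → ∞. Then, with the same sequence (λ_n)_n, sup_{0≤t≤T} ( |x_n(t) − x(λ_n(t))| + | ∫_0^t y_n(s) ds − ∫_0^{λ_n(t)} y(s) ds | ) → 0 as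 n → ∞; in particular the pairs (x_n, t ↦ ∫_0^t y_n(s) ds) converge to (x, t ↦ ∫_0^t y(s) ds) jointly with a common sequence of time-changes. -/
open Set MeasureTheory

lemma countable_jump_aux (y : ℝ → ℝ) :
    {t : ℝ | ∃ L, L < y t ∧ Filter.Tendsto y (nhdsWithin t (Iio t)) (nhds L)}.Countable := by
  have key : ∀ t ∈ {t : ℝ | ∃ L, L < y t ∧ Filter.Tendsto y (nhdsWithin t (Iio t)) (nhds L)},
      ∃ pq : ℚ × ℚ, (pq.1 : ℝ) < y t ∧ (pq.2 : ℝ) < t ∧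
        ∀ s, (pq.2 : ℝ) < s → s < t → y s < pq.1 := by
    rintro t ⟨L, hL, ht⟩
    obtain ⟨p, hp1, hp2⟩ := exists_rat_btwn hL
    have h := ht.eventually (gt_mem_nhds hp1)
    obtain ⟨a, ha, hsub⟩ := (mem_nhdsLT_iff_exists_Ioo_subset).1 h
    obtain ⟨q, hq1, hq2⟩ := exists_rat_btwn (show a < t from ha)
    exact ⟨(p, q), hp2, hq2, fun s h1 h2 => hsub ⟨hq1.trans h1, h2⟩⟩
  choose! f hf using key
  refine MapsTo.countable_of_injOn (mapsTo_univ f _) ?_ (Set.to_countable univ)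
  intro t ht t' ht' heq
  obtain ⟨h1, h2, h3⟩ := hf t ht
  obtain ⟨h1', h2', h3'⟩ := hf t' ht'
  rw [← heq] at h1' h2' h3'
  rcases lt_trichotomy t t' with h | h | h
  · exact absurd (h3' t h2 h) (not_lt.2 h1.le)
  · exact h
  · exact absurd (h3 t' h2' h) (not_lt.2 h1'.le)

theorem joint_integral_skorohod_convergence (T : ℝ) (hT : 0 < T)
    (x y : ℝ → ℝ) (xn yn : ℕ → ℝ → ℝ) (l : ℕ → ℝ → ℝ)
    (hy_bdd : ∃ M : ℝ, ∀ t ∈ Icc (0 : ℝ) T, |y t| ≤ M)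
    (hy_right : ∀ t ∈ Icc (0 : ℝ) T, ContinuousWithinAt y (Ici t) t)
    (hy_left : ∀ t ∈ Ioc (0 : ℝ) T, ∃ L : ℝ,
      Filter.Tendsto y (nhdsWithin t (Iio t)) (nhds L))
    (hyn_meas : ∀ n, Measurable (yn n))
    (hl_cont : ∀ n, ContinuousOn (l n) (Icc (0 : ℝ) T))
    (hl_mono : ∀ n, StrictMonoOn (l n) (Icc (0 : ℝ) T))
    (hl_maps : ∀ n, MapsTo (l n) (Icc (0 : ℝ) T) (Icc (0 : ℝ) T))
    (hl0 : ∀ n, l n 0 = 0) (hlT : ∀ n, l n T = T)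
    (hxconv : ∀ ε > (0 : ℝ), ∃ N, ∀ n ≥ N, ∀ t ∈ Icc (0 : ℝ) T, |xn n t - x (l n t)| ≤ ε)
    (hyconv : ∀ ε > (0 : ℝ), ∃ N, ∀ n ≥ N, ∀ t ∈ Icc (0 : ℝ) T, |yn n t - y (l n t)| ≤ ε)
    (hlconv : ∀ ε > (0 : ℝ), ∃ N, ∀ n ≥ N, ∀ t ∈ Icc (0 : ℝ) T, |t - l n t| ≤ ε) :
    ∀ ε > (0 : ℝ), ∃ N, ∀ n ≥ N, ∀ t ∈ Icc (0 : ℝ) T,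
      |xn n t - x (l n t)| +
        |(∫ s in (0 : ℝ)..t, yn n s) - ∫ s in (0 : ℝ)..(l n t), y s| ≤ ε := by
  obtain ⟨M, hM⟩ := hy_bdd
  have hM0 : 0 ≤ M := (abs_nonneg _).trans (hM 0 ⟨le_rfl, hT.le⟩)
  set μ := volume.restrict (Ioc (0 : ℝ) T) with hμ
  have hcount : ∀ᵐ t ∂μ, Filter.Tendsto (fun n => yn n t) Filter.atTop (nhds (y t)) := by
    have c1 := (countable_jump_aux y).ae_notMem μ
    have c2 := (countable_jump_aux (fun t => - y t)).ae_notMem μ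
    filter_upwards [c1, c2, ae_restrict_mem measurableSet_Ioc] with t h1 h2 ht
    have htI : t ∈ Icc (0 : ℝ) T := ⟨ht.1.le, ht.2⟩
    obtain ⟨L, hL⟩ := hy_left t ht
    have hLy : L = y t := by
      rcases lt_trichotomy L (y t) with h | h | h
      · exact absurd ⟨L, h, hL⟩ h1
      · exact h
      · exact absurd ⟨-L, neg_lt_neg h, hL.neg⟩ h2
    subst hLy
    have hc : ContinuousAt y t := by
      rw [ContinuousAt, ← nhdsLT_sup_nhdsGE, Filter.tendsto_sup]
      exact ⟨hL, hy_right t htI⟩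
    have hlt : Filter.Tendsto (fun n => l n t) Filter.atTop (nhds t) := by
      rw [Metric.tendsto_atTop]
      intro ε hε
      obtain ⟨N, hN⟩ := hlconv (ε / 2) (by positivity)
      refine ⟨N, fun n hn => ?_⟩
      rw [dist_comm, Real.dist_eq]
      linarith [hN n hn t htI]
    have hd : Filter.Tendsto (fun n => yn n t - y (l n t)) Filter.atTop (nhds 0) := by
      rw [Metric.tendsto_atTop]
      intro ε hε
      obtain ⟨N, hN⟩ := hyconv (ε / 2) (by positivity)
      refine ⟨N, fun n hn => ?_⟩
      rw [Real.dist_eq, sub_zero]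
      linarith [hN n hn t htI]
    have := hd.add (hc.tendsto.comp hlt)
    simpa using this
  have hymeas : AEStronglyMeasurable y μ :=
    aestronglyMeasurable_of_tendsto_ae Filter.atTop
      (fun n => (hyn_meas n).aestronglyMeasurable) hcount
  have hyint : Integrable y μ := by
    refine Integrable.of_bound hymeas M ?_
    filter_upwards [ae_restrict_mem measurableSet_Ioc] with t ht
    exact hM t ⟨ht.1.le, ht.2⟩
  obtain ⟨N0, hN0⟩ := hyconv 1 one_pos
  have hynb : ∀ n ≥ N0, ∀ t ∈ Icc (0 : ℝ) T, |yn n t| ≤ M + 1 := by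
    intro n hn t ht
    have h1 := hN0 n hn t ht
    have h2 := hM _ (hl_maps n ht)
    have h3 := abs_add_le (yn n t - y (l n t)) (y (l n t))
    rw [sub_add_cancel] at h3
    linarith
  have hynint : ∀ n ≥ N0, Integrable (yn n) μ := by
    intro n hn
    refine Integrable.of_bound (hyn_meas n).aestronglyMeasurable (M + 1) ?_
    filter_upwards [ae_restrict_mem measurableSet_Ioc] with t ht
    exact hynb n hn t ⟨ht.1.le, ht.2⟩
  have hlim : Filter.Tendsto (fun n => ∫ s, |yn n s - y s| ∂μ) Filter.atTop (nhds 0) := by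
    have := tendsto_integral_filter_of_dominated_convergence (μ := μ) (l := Filter.atTop)
      (F := fun n s => |yn n s - y s|) (f := fun _ => (0 : ℝ)) (fun _ => 2 * M + 1)
      (Filter.Eventually.of_forall fun n =>
        ((hyn_meas n).aestronglyMeasurable.sub hymeas).norm) ?_ (integrable_const _) ?_
    · simpa using this
    · filter_upwards [Filter.eventually_ge_atTop N0] with n hn
      filter_upwards [ae_restrict_mem measurableSet_Ioc] with t ht
      have htI : t ∈ Icc (0 : ℝ) T := ⟨ht.1.le, ht.2⟩
      rw [Real.norm_eq_abs, abs_abs]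
      have := abs_sub (yn n t) (y t)
      linarith [hynb n hn t htI, hM t htI]
    · filter_upwards [hcount] with t ht
      have := (ht.sub_const (y t)).abs
      simpa using this
  intro ε hε
  obtain ⟨N1, hN1⟩ := hxconv (ε / 3) (by positivity)
  obtain ⟨N2, hN2⟩ := hlconv (ε / 3 / (M + 1)) (by positivity)
  obtain ⟨N3, hN3⟩ := Filter.eventually_atTop.1
    (hlim.eventually (gt_mem_nhds (show (0 : ℝ) < ε / 3 by positivity)))
  refine ⟨max (max N0 N1) (max N2 N3), fun n hn t ht => ?_⟩
  simp only [ge_iff_le, max_le_iff] at hn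
  obtain ⟨⟨hn0, hn1⟩, hn2, hn3⟩ := hn
  have e1 := hN1 n hn1 t ht
  have e2 := hN2 n hn2 t ht
  have e3 := hN3 n hn3
  have hlI := hl_maps n ht
  have hyon : IntegrableOn y (Ioc 0 T) volume := hyint
  have hynon : IntegrableOn (yn n) (Ioc 0 T) volume := hynint n hn0
  have ii : ∀ f : ℝ → ℝ, IntegrableOn f (Ioc 0 T) volume → ∀ b ∈ Icc (0 : ℝ) T,
      IntervalIntegrable f volume 0 b := fun f hf b hb =>
    (intervalIntegrable_iff_integrableOn_Ioc_of_le hb.1).2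
      (hf.mono_set (Ioc_subset_Ioc_right hb.2))
  have d1 : (∫ s in (0 : ℝ)..t, yn n s) - ∫ s in (0 : ℝ)..(l n t), y s
      = (∫ s in (0 : ℝ)..t, (yn n s - y s)) + ∫ s in (l n t)..t, y s := by
    rw [intervalIntegral.integral_sub (ii _ hynon t ht) (ii _ hyon t ht),
      ← intervalIntegral.integral_interval_sub_left (ii _ hyon t ht) (ii _ hyon _ hlI)]
    ring
  have d2 : |∫ s in (0 : ℝ)..t, (yn n s - y s)| ≤ ∫ s, |yn n s - y s| ∂μ := by
    refine (intervalIntegral.abs_integral_le_integral_abs ht.1).trans ?_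
    rw [intervalIntegral.integral_of_le ht.1]
    exact setIntegral_mono_set ((hynon.sub hyon).abs)
      (Filter.Eventually.of_forall fun _ => abs_nonneg _)
      (Ioc_subset_Ioc_right ht.2).eventuallyLE
  have d3 : |∫ s in (l n t)..t, y s| ≤ M * |t - l n t| := by
    refine intervalIntegral.norm_integral_le_of_norm_le_const (f := y) fun s hs => ?_
    have := uIoc_subset_uIcc hs
    exact hM s (uIcc_subset_Icc hlI ht this)
  have d4 : M * |t - l n t| ≤ ε / 3 := by
    have : (M + 1) * |t - l n t| ≤ ε / 3 := by
      rw [le_div_iff₀ (by positivity)] at e2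
      linarith
    linarith [abs_nonneg (t - l n t)]
  rw [d1]
  have := abs_add_le (∫ s in (0 : ℝ)..t, (yn n s - y s)) (∫ s in (l n t)..t, y s)
  linarith
end

section
/- Let T > 0, K > 0, and let v : [0, T] → ℝ be a measurable function with 0 ≤ v(t) ≤ e^{−2} for all t ∈ [0, T]. Suppose that for all t ∈ [0, T], v(t) ≤ −K ∫_0^t v(s) ln v(s) ds, where the integrand s ↦ −v(s) ln v(s) is taken to be 0 whenever v(s) = 0. Then v(t) = 0 for all t ∈ [0, T]. -/
open Set MeasureTheory

lemma lg_tangent (x L : ℝ) (hx : 0 ≤ x) : -(x * Real.log x) ≤ L * x + Real.exp (-L) := by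
  rcases hx.eq_or_lt with h | h
  · subst h; simp; positivity
  · have h1 := Real.add_one_le_exp (-L - Real.log x)
    have h2 : Real.exp (-L) = x * Real.exp (-L - Real.log x) := by
      rw [Real.exp_sub, Real.exp_log h]; field_simp
    rw [h2]
    nlinarith

lemma lg_integrable (T : ℝ) (v : ℝ → ℝ) (hv_meas : Measurable v)
    (hv_mem : ∀ t ∈ Icc (0 : ℝ) T, v t ∈ Icc (0 : ℝ) (Real.exp (-2)))
    (a t : ℝ) (ha : 0 ≤ a) (hat : a ≤ t) (ht : t ≤ T) :
    IntervalIntegrable (fun s => v s * Real.log (v s)) volume a t := by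
  rw [intervalIntegrable_iff_integrableOn_Ioc_of_le hat]
  refine Measure.integrableOn_of_bounded (M := 1) (by simp) ?_ ?_
  · exact (hv_meas.mul (Real.measurable_log.comp hv_meas)).aestronglyMeasurable
  · refine (ae_restrict_iff' measurableSet_Ioc).2 (Filter.Eventually.of_forall ?_)
    intro s hs
    have h := hv_mem s ⟨by linarith [hs.1], by linarith [hs.2]⟩
    have h1 : v s ≤ 1 := h.2.trans (Real.exp_le_one_iff.2 (by norm_num))
    rw [Real.norm_eq_abs, abs_le]
    have h2 := Real.self_sub_one_le_mul_log h.1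
    have h3 := Real.mul_log_nonpos h.1 h1
    constructor <;> linarith [h.1]

lemma lg_step (T K : ℝ) (hK : 0 < K)
    (v : ℝ → ℝ) (hv_meas : Measurable v)
    (hv_mem : ∀ t ∈ Icc (0 : ℝ) T, v t ∈ Icc (0 : ℝ) (Real.exp (-2)))
    (hineq : ∀ t ∈ Icc (0 : ℝ) T,
      v t ≤ -K * ∫ s in (0 : ℝ)..t, v s * Real.log (v s))
    (a b : ℝ) (ha : 0 ≤ a) (hab : a ≤ b) (hb : b ≤ T) (hh : K * (b - a) ≤ 1 / 4)
    (hz : ∀ t ∈ Icc 0 a, v t = 0) : v b = 0 := by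
  have key : ∀ L : ℝ, 0 < L → v b ≤ 1 / 2 * Real.exp (-(L / 2)) := by
    intro L hL
    set S := (fun s => v s * Real.exp (-(2 * K * L * (s - a)))) '' Icc a b with hS
    have hbdd : BddAbove S := by
      refine ⟨1, ?_⟩
      rintro _ ⟨s, hs, rfl⟩
      have h := hv_mem s ⟨by linarith [hs.1], by linarith [hs.2]⟩
      have h1 : v s ≤ 1 := h.2.trans (Real.exp_le_one_iff.2 (by norm_num))
      have h2 : Real.exp (-(2 * K * L * (s - a))) ≤ 1 := by
        apply Real.exp_le_one_iff.2
        have : 0 ≤ s - a := by linarith [hs.1]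
        have : 0 ≤ 2 * K * L * (s - a) := by positivity
        linarith
      exact mul_le_one₀ h1 (Real.exp_pos _).le h2
    set N := sSup S with hN
    have hvN : ∀ s ∈ Icc a b, v s ≤ N * Real.exp (2 * K * L * (s - a)) := by
      intro s hs
      have h := le_csSup hbdd (mem_image_of_mem _ hs)
      have h' := mul_le_mul_of_nonneg_right h (Real.exp_pos (2 * K * L * (s - a))).le
      simp only [mul_assoc (v s), ← Real.exp_add] at h'
      simpa using h'
    have hN0 : 0 ≤ N := by
      have := hvN a ⟨le_rfl, hab⟩
      simp at this
      linarith [(hv_mem a ⟨ha, by linarith⟩).1]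
    have himp : N ≤ N / 2 + 1 / 4 * Real.exp (-L) := by
      refine csSup_le ((nonempty_Icc.2 hab).image _) ?_
      rintro _ ⟨t, ht, rfl⟩
      have htT : t ≤ T := ht.2.trans hb
      have h1 := hineq t ⟨ha.trans ht.1, htT⟩
      have i1 := lg_integrable T v hv_meas hv_mem 0 a le_rfl ha (by linarith [ht.1])
      have i2 := lg_integrable T v hv_meas hv_mem a t ha ht.1 htT
      rw [← intervalIntegral.integral_add_adjacent_intervals i1 i2] at h1
      have z : ∫ s in (0:ℝ)..a, v s * Real.log (v s) = 0 := by
        apply intervalIntegral.integral_zero_ae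
        refine Filter.Eventually.of_forall ?_
        intro s hs
        rw [uIoc_of_le ha] at hs
        simp [hz s ⟨hs.1.le, hs.2⟩]
      rw [z, zero_add] at h1
      have hc : Continuous (fun s => L * (N * Real.exp (2 * K * L * (s - a))) + Real.exp (-L)) := by
        fun_prop
      have h2 : ∫ s in a..t, -(v s * Real.log (v s)) ≤
          ∫ s in a..t, (L * (N * Real.exp (2 * K * L * (s - a))) + Real.exp (-L)) := by
        refine intervalIntegral.integral_mono_on ht.1 i2.neg (hc.intervalIntegrable _ _) ?_
        intro s hs
        have hs' : s ∈ Icc a b := ⟨hs.1, hs.2.trans ht.2⟩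
        have := lg_tangent (v s) L (hv_mem s ⟨ha.trans hs.1, hs.2.trans htT⟩).1
        have h3 := mul_le_mul_of_nonneg_left (hvN s hs') hL.le
        linarith
      have h3 : ∫ s in a..t, (L * (N * Real.exp (2 * K * L * (s - a))) + Real.exp (-L)) =
          (N / (2 * K) * Real.exp (2 * K * L * (t - a)) + Real.exp (-L) * t) -
          (N / (2 * K) * Real.exp (2 * K * L * (a - a)) + Real.exp (-L) * a) := by
        refine intervalIntegral.integral_eq_sub_of_hasDerivAt
          (f := fun s => N / (2 * K) * Real.exp (2 * K * L * (s - a)) + Real.exp (-L) * s)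
          ?_ (hc.intervalIntegrable _ _)
        intro s _
        have d := (((((hasDerivAt_id s).sub_const a).const_mul (2 * K * L)).exp).const_mul
          (N / (2 * K))).add ((hasDerivAt_id s).const_mul (Real.exp (-L)))
        refine d.congr_deriv ?_
        simp only [id]
        field_simp
      rw [h3, intervalIntegral.integral_neg] at h2
      simp only [sub_self, mul_zero, Real.exp_zero, mul_one] at h2
      set E := Real.exp (2 * K * L * (t - a)) with hE
      have hE1 : 1 ≤ E := by
        apply Real.one_le_exp
        have : 0 ≤ t - a := by linarith [ht.1]
        positivity
      have h4 := mul_le_mul_of_nonneg_left h2 hK.le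
      have h5 : K * ((N / (2 * K) * E + Real.exp (-L) * t) - (N / (2 * K) + Real.exp (-L) * a))
          = N / 2 * E - N / 2 + K * (t - a) * Real.exp (-L) := by
        field_simp
        ring
      rw [h5] at h4
      have h6 : K * (t - a) ≤ 1 / 4 := by
        have := mul_le_mul_of_nonneg_left (sub_le_sub_right ht.2 a) hK.le
        linarith
      have h7 := mul_le_mul_of_nonneg_right h6 (Real.exp_pos (-L)).le
      have h8 : v t ≤ (N / 2 + 1 / 4 * Real.exp (-L)) * E := by
        have := mul_le_mul_of_nonneg_left hE1 (Real.exp_pos (-L)).le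
        linarith
      show v t * Real.exp (-(2 * K * L * (t - a))) ≤ _
      rw [Real.exp_neg, ← hE, ← div_eq_mul_inv, div_le_iff₀ (by linarith)]
      exact h8
    have hN2 : N ≤ 1 / 2 * Real.exp (-L) := by linarith
    have h1 := hvN b ⟨hab, le_rfl⟩
    have h2 : Real.exp (2 * K * L * (b - a)) ≤ Real.exp (L / 2) := by
      apply Real.exp_le_exp.2
      nlinarith
    calc v b ≤ N * Real.exp (2 * K * L * (b - a)) := h1
      _ ≤ (1 / 2 * Real.exp (-L)) * Real.exp (L / 2) := by gcongr
      _ = 1 / 2 * Real.exp (-(L / 2)) := by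
        rw [mul_assoc, ← Real.exp_add]; congr 2; ring
  have h0 := (hv_mem b ⟨ha.trans hab, hb⟩).1
  by_contra hne
  have hpos : 0 < v b := lt_of_le_of_ne h0 (Ne.symm hne)
  have h1 := key (2 / v b) (by positivity)
  have h2 := Real.add_one_le_exp (2 / v b / 2)
  rw [Real.exp_neg, ← div_eq_mul_inv, le_div_iff₀ (Real.exp_pos _)] at h1
  have h3 := mul_le_mul_of_nonneg_left h2 h0
  have h4 : v b * (2 / v b / 2 + 1) = 1 + v b := by field_simp
  linarith

theorem log_gronwall_zero (T K : ℝ) (hT : 0 < T) (hK : 0 < K)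
    (v : ℝ → ℝ) (hv_meas : Measurable v)
    (hv_mem : ∀ t ∈ Icc (0 : ℝ) T, v t ∈ Icc (0 : ℝ) (Real.exp (-2)))
    (hineq : ∀ t ∈ Icc (0 : ℝ) T,
      v t ≤ -K * ∫ s in (0 : ℝ)..t, v s * Real.log (v s)) :
    ∀ t ∈ Icc (0 : ℝ) T, v t = 0 := by
  have main : ∀ n : ℕ, ∀ t ∈ Icc (0 : ℝ) T, K * t ≤ n * (1 / 4) → v t = 0 := by
    intro n
    induction n with
    | zero =>
      intro t ht hn
      have h0 : t = 0 := by
        have := ht.1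
        simp at hn
        nlinarith
      subst h0
      have := hineq 0 ht
      simp at this
      exact le_antisymm this (hv_mem 0 ht).1
    | succ n ih =>
      intro t ht hn
      push_cast at hn
      by_cases hc : K * t ≤ n * (1 / 4)
      · exact ih t ht hc
      · push Not at hc
        have e : K * (n * (1 / 4) / K) = n * (1 / 4) := by field_simp
        have hle : n * (1 / 4) / K ≤ t := by
          rw [div_le_iff₀ hK]; linarith
        refine lg_step T K hK v hv_meas hv_mem hineq (n * (1 / 4) / K) t (by positivity) hle
          ht.2 ?_ ?_
        · rw [mul_sub, e]; linarith
        · intro s hs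
          refine ih s ⟨hs.1, by linarith [hs.2, ht.2]⟩ ?_
          have := mul_le_mul_of_nonneg_left hs.2 hK.le
          linarith
  intro t ht
  obtain ⟨n, hn⟩ := exists_nat_ge (K * t * 4)
  exact main n t ht (by linarith)
end

section
/- Let T > 0, K > 0, c ∈ (0, e^{−2}), and let v : [0, T] → ℝ be a measurable function with 0 ≤ v(t) ≤ e^{−2} for all t ∈ [0, T]. Suppose that for all t ∈ [0, T], v(t) ≤ c − K ∫_0^t v(s) ln v(s) ds, where the integrand s ↦ −v(s) ln v(s) is taken to be 0 whenever v(s) = 0. Then v(T) ≤ c^{exp(−K T)}, where c^{exp(−KT)} denotes the real power exp( exp(−KT) · ln c ). -/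
open Set MeasureTheory

lemma lgq_phi (c y v d : ℝ) (hc : 0 < c) (hcy : c ≤ y) (hy : y ≤ Real.exp (-2))
    (hv0 : 0 ≤ v) (hv : v ≤ Real.exp (-2)) (hd : 0 ≤ d) (h : v ≤ y + d) :
    -(v * Real.log v) ≤ -(y * Real.log y) + (-Real.log c) * d := by
  have hy0 : 0 < y := hc.trans_le hcy
  have hly : Real.log y ≤ -2 := by
    rw [Real.log_le_iff_le_exp hy0]; exact hy
  have hlc : Real.log c ≤ Real.log y := Real.log_le_log hc hcy
  have hCd : 0 ≤ (-Real.log c) * d := mul_nonneg (by linarith) hd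
  rcases le_or_gt v y with hvy | hvy
  · rcases hv0.eq_or_lt with h0 | h0
    · subst h0
      have : 0 ≤ y * (-Real.log y) := mul_nonneg hy0.le (by linarith)
      simp only [zero_mul, neg_zero]
      linarith
    · have h1 := Real.log_le_sub_one_of_pos (div_pos hy0 h0)
      rw [Real.log_div hy0.ne' h0.ne'] at h1
      have h2 := mul_le_mul_of_nonneg_left h1 h0.le
      have h3 : v * (y / v - 1) = y - v := by field_simp
      rw [h3] at h2
      nlinarith [mul_nonneg (sub_nonneg.2 hvy) (show 0 ≤ -Real.log y - 1 by linarith)]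
  · have h1 : Real.log y ≤ Real.log v := Real.log_le_log hy0 hvy.le
    have h2 : 0 ≤ y * (Real.log v - Real.log y) := mul_nonneg hy0.le (by linarith)
    have h3 : (v - y) * (-Real.log v) ≤ (v - y) * (-Real.log c) :=
      mul_le_mul_of_nonneg_left (by linarith) (by linarith)
    have h4 : (-Real.log c) * (v - y) ≤ (-Real.log c) * d :=
      mul_le_mul_of_nonneg_left (by linarith) (by linarith)
    nlinarith

theorem log_gronwall_quantitative (T K c : ℝ) (hT : 0 < T) (hK : 0 < K)
    (hc : c ∈ Ioo (0 : ℝ) (Real.exp (-2)))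
    (v : ℝ → ℝ) (hv_meas : Measurable v)
    (hv_mem : ∀ t ∈ Icc (0 : ℝ) T, v t ∈ Icc (0 : ℝ) (Real.exp (-2)))
    (hineq : ∀ t ∈ Icc (0 : ℝ) T,
      v t ≤ c - K * ∫ s in (0 : ℝ)..t, v s * Real.log (v s)) :
    v T ≤ c ^ Real.exp (-(K * T)) := by
  obtain ⟨hc0, hc2⟩ := hc
  have hL : Real.log c < -2 := by rw [Real.log_lt_iff_lt_exp hc0]; exact hc2
  set y : ℝ → ℝ := fun t => Real.exp (Real.log c * Real.exp (-(K * t))) with hy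
  have hyT : c ^ Real.exp (-(K * T)) = y T := by rw [Real.rpow_def_of_pos hc0]
  rw [hyT]
  rcases le_or_gt (Real.exp (-2)) (y T) with hbig | hsmall
  · exact (hv_mem T ⟨hT.le, le_rfl⟩).2.trans hbig
  have hylog : ∀ t, Real.log (y t) = Real.log c * Real.exp (-(K * t)) := fun t => Real.log_exp _
  have hy0 : y 0 = c := by simp [hy, Real.exp_log hc0]
  have hmono : Monotone y := by
    intro a b hab
    apply Real.exp_le_exp.2
    have : Real.exp (-(K * b)) ≤ Real.exp (-(K * a)) := by
      apply Real.exp_le_exp.2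
      nlinarith
    nlinarith
  have hyd : ∀ t, HasDerivAt y (K * -(y t * Real.log (y t))) t := by
    intro t
    have h1 : HasDerivAt (fun t : ℝ => -(K * t)) (-(K * 1)) t :=
      ((hasDerivAt_id t).const_mul K).neg
    have h2 := (h1.exp.const_mul (Real.log c)).exp
    convert h2 using 1
    rw [hylog]
    ring
  have hycont : Continuous y := by fun_prop
  have hymul : Continuous fun s => y s * Real.log (y s) :=
    Real.continuous_mul_log.comp hycont
  set A : ℝ := K * -Real.log c with hA
  have hA0 : 0 < A := mul_pos hK (by linarith)
  have hvint : ∀ t ∈ Icc (0:ℝ) T,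
      IntervalIntegrable (fun s => v s * Real.log (v s)) volume 0 t := by
    intro t ht
    obtain ⟨B, hB⟩ := (isCompact_Icc (a := (0:ℝ)) (b := Real.exp (-2))).exists_bound_of_continuousOn
      Real.continuous_mul_log.continuousOn
    rw [intervalIntegrable_iff_integrableOn_Ioc_of_le ht.1]
    refine Measure.integrableOn_of_bounded (M := B) (by simp) ?_ ?_
    · exact (Real.continuous_mul_log.measurable.comp hv_meas).aestronglyMeasurable
    · refine (ae_restrict_iff' measurableSet_Ioc).2 (Filter.Eventually.of_forall ?_)
      intro s hs
      exact hB (v s) (hv_mem s ⟨hs.1.le, hs.2.trans ht.2⟩)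
  have key : ∀ n : ℕ, ∀ t ∈ Icc (0:ℝ) T, v t ≤ y t + (1/2)^n * Real.exp (2 * A * t) := by
    intro n
    induction n with
    | zero =>
      intro t ht
      have h1 := (hv_mem t ht).2
      have h2 : Real.exp (-2) ≤ Real.exp (2 * A * t) := by
        apply Real.exp_le_exp.2
        have := mul_nonneg hA0.le ht.1
        linarith
      have h3 : 0 < y t := Real.exp_pos _
      simp only [pow_zero, one_mul]
      linarith
    | succ n ih =>
      intro t ht
      set d : ℝ := (1/2)^n with hd
      have hd0 : 0 < d := by positivity
      have hG : ∀ s, HasDerivAt (fun s => y s + d / 2 * Real.exp (2 * A * s))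
          (K * (-(y s * Real.log (y s)) + (-Real.log c) * (d * Real.exp (2 * A * s)))) s := by
        intro s
        have h1 : HasDerivAt (fun t : ℝ => 2 * A * t) (2 * A * 1) s :=
          (hasDerivAt_id s).const_mul (2 * A)
        have h2 := (hyd s).add (h1.exp.const_mul (d / 2))
        refine HasDerivAt.congr_deriv h2 ?_
        rw [hA]; ring
      have hcont : Continuous fun s =>
          (-(y s * Real.log (y s)) + (-Real.log c) * (d * Real.exp (2 * A * s))) := by
        fun_prop
      have hF := intervalIntegral.integral_eq_sub_of_hasDerivAt (a := 0) (b := t)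
        (fun s _ => hG s) ((hcont.const_mul K).intervalIntegrable _ _)
      rw [intervalIntegral.integral_const_mul] at hF
      have hle : ∫ s in (0:ℝ)..t, -(v s * Real.log (v s)) ≤ ∫ s in (0:ℝ)..t,
          (-(y s * Real.log (y s)) + (-Real.log c) * (d * Real.exp (2 * A * s))) := by
        refine intervalIntegral.integral_mono_on ht.1 (hvint t ht).neg
          (hcont.intervalIntegrable _ _) ?_
        intro s hs
        have hs' : s ∈ Icc (0:ℝ) T := ⟨hs.1, hs.2.trans ht.2⟩
        exact lgq_phi c (y s) (v s) _ hc0 (hy0 ▸ hmono hs.1) ((hmono hs'.2).trans hsmall.le)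
          (hv_mem s hs').1 (hv_mem s hs').2 (by positivity) (ih s hs')
      rw [intervalIntegral.integral_neg] at hle
      have hle2 := mul_le_mul_of_nonneg_left hle hK.le
      rw [hF] at hle2
      have := hineq t ht
      simp only [hy0, mul_zero, Real.exp_zero, mul_one] at hle2
      rw [pow_succ, ← hd]
      linarith
  have hlim : Filter.Tendsto (fun n : ℕ => y T + (1/2 : ℝ)^n * Real.exp (2 * A * T))
      Filter.atTop (nhds (y T + 0 * Real.exp (2 * A * T))) :=
    ((tendsto_pow_atTop_nhds_zero_of_lt_one (by norm_num) (by norm_num)).mul_const _).const_add _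
  rw [zero_mul, add_zero] at hlim
  exact ge_of_tendsto' hlim fun n => key n T ⟨hT.le, le_rfl⟩
end
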